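/- The subgroup B of GL(2,ℂ) generated by {i, w, c} has order 48, every element of B is unitary with determinant 1 (so B is contained in SU(2)), the unique element of order 2 in B is -1 (the negative of the identity matrix), and B is not isomorphic as a group to G. Thus the two double covers of the octahedral group are non-isomorphic groups of order 48. -/

import Mathlib

open Matrix Complex
open scoped MatrixGroups

noncomputable section

def iM : Matrix (Fin 2) (Fin 2) ℂ := !![0, 1; -1, 0]
def jM : Matrix (Fin 2) (Fin 2) ℂ := !![0, Complex.I; Complex.I, 0]
def kM : Matrix (Fin 2) (Fin 2) ℂ := !![Complex.I, 0; 0, -Complex.I]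
def wM : Matrix (Fin 2) (Fin 2) ℂ :=
  (1 / 2 : ℂ) • !![-1 + Complex.I, 1 + Complex.I; -1 + Complex.I, -1 - Complex.I]
def cM : Matrix (Fin 2) (Fin 2) ℂ :=
  ((Real.sqrt 2 : ℂ))⁻¹ • !![-Complex.I, Complex.I; Complex.I, Complex.I]
def dM : Matrix (Fin 2) (Fin 2) ℂ :=
  ((Real.sqrt 2 : ℂ))⁻¹ • !![-1, 1; 1, 1]

def G : Subgroup (GL (Fin 2) ℂ) :=
  Subgroup.closure {g : GL (Fin 2) ℂ |
    (g : Matrix (Fin 2) (Fin 2) ℂ) = iM ∨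
    (g : Matrix (Fin 2) (Fin 2) ℂ) = wM ∨
    (g : Matrix (Fin 2) (Fin 2) ℂ) = dM}

def B : Subgroup (GL (Fin 2) ℂ) :=
  Subgroup.closure {g : GL (Fin 2) ℂ |
    (g : Matrix (Fin 2) (Fin 2) ℂ) = iM ∨
    (g : Matrix (Fin 2) (Fin 2) ℂ) = wM ∨
    (g : Matrix (Fin 2) (Fin 2) ℂ) = cM}

/-- Scaled quaternion `s (a + b i + c j + d k)`, where `s = 1/2` or `1/√2` according to `t`. -/
@[ext] structure QQ where
  t : Bool
  a : ℤ
  b : ℤ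
  c : ℤ
  d : ℤ
deriving DecidableEq

namespace QQ

/-- the elements of the binary octahedral group -/
def elems : List QQ := [
  ⟨false, 2, 0, 0, 0⟩, ⟨false, -2, 0, 0, 0⟩, ⟨false, 0, 2, 0, 0⟩, ⟨false, 0, -2, 0, 0⟩,
  ⟨false, 0, 0, 2, 0⟩, ⟨false, 0, 0, -2, 0⟩, ⟨false, 0, 0, 0, 2⟩, ⟨false, 0, 0, 0, -2⟩,
  ⟨false, 1, 1, 1, 1⟩, ⟨false, 1, 1, 1, -1⟩, ⟨false, 1, 1, -1, 1⟩, ⟨false, 1, 1, -1, -1⟩,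
  ⟨false, 1, -1, 1, 1⟩, ⟨false, 1, -1, 1, -1⟩, ⟨false, 1, -1, -1, 1⟩, ⟨false, 1, -1, -1, -1⟩,
  ⟨false, -1, 1, 1, 1⟩, ⟨false, -1, 1, 1, -1⟩, ⟨false, -1, 1, -1, 1⟩, ⟨false, -1, 1, -1, -1⟩,
  ⟨false, -1, -1, 1, 1⟩, ⟨false, -1, -1, 1, -1⟩, ⟨false, -1, -1, -1, 1⟩, ⟨false, -1, -1, -1, -1⟩,
  ⟨true, 1, 1, 0, 0⟩, ⟨true, 1, -1, 0, 0⟩, ⟨true, -1, 1, 0, 0⟩, ⟨true, -1, -1, 0, 0⟩,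
  ⟨true, 1, 0, 1, 0⟩, ⟨true, 1, 0, -1, 0⟩, ⟨true, -1, 0, 1, 0⟩, ⟨true, -1, 0, -1, 0⟩,
  ⟨true, 1, 0, 0, 1⟩, ⟨true, 1, 0, 0, -1⟩, ⟨true, -1, 0, 0, 1⟩, ⟨true, -1, 0, 0, -1⟩,
  ⟨true, 0, 1, 1, 0⟩, ⟨true, 0, 1, -1, 0⟩, ⟨true, 0, -1, 1, 0⟩, ⟨true, 0, -1, -1, 0⟩,
  ⟨true, 0, 1, 0, 1⟩, ⟨true, 0, 1, 0, -1⟩, ⟨true, 0, -1, 0, 1⟩, ⟨true, 0, -1, 0, -1⟩,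
  ⟨true, 0, 0, 1, 1⟩, ⟨true, 0, 0, 1, -1⟩, ⟨true, 0, 0, -1, 1⟩, ⟨true, 0, 0, -1, -1⟩]

def pa (x y : QQ) : ℤ := x.a * y.a - x.b * y.b - x.c * y.c - x.d * y.d
def pb (x y : QQ) : ℤ := x.a * y.b + x.b * y.a + x.c * y.d - x.d * y.c
def pc (x y : QQ) : ℤ := x.a * y.c - x.b * y.d + x.c * y.a + x.d * y.b
def pd (x y : QQ) : ℤ := x.a * y.d + x.b * y.c - x.c * y.b + x.d * y.a

/-- the divisor needed to renormalize a product -/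
def dv (x y : QQ) : ℤ := if x.t && y.t then 1 else 2

def mul (x y : QQ) : QQ :=
  ⟨xor x.t y.t, pa x y / dv x y, pb x y / dv x y, pc x y / dv x y, pd x y / dv x y⟩

def one : QQ := ⟨false, 2, 0, 0, 0⟩
def neg : QQ := ⟨false, -2, 0, 0, 0⟩
def qi : QQ := ⟨false, 0, 2, 0, 0⟩
def qw : QQ := ⟨false, -1, 1, 1, 1⟩
def qc : QQ := ⟨true, 0, 0, 1, -1⟩
def conj (x : QQ) : QQ := ⟨x.t, x.a, -x.b, -x.c, -x.d⟩

def pw (x : QQ) : ℕ → QQ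
  | 0 => one
  | n + 1 => mul (pw x n) x

def sc (t : Bool) : ℂ := if t then ((Real.sqrt 2 : ℂ))⁻¹ else 1 / 2

def toMat (x : QQ) : Matrix (Fin 2) (Fin 2) ℂ :=
  sc x.t • !![(x.a : ℂ) + x.d * I, x.b + x.c * I; -x.b + x.c * I, x.a - x.d * I]

theorem dvd_elems : ∀ x ∈ elems, ∀ y ∈ elems,
    dv x y * (mul x y).a = pa x y ∧ dv x y * (mul x y).b = pb x y ∧
    dv x y * (mul x y).c = pc x y ∧ dv x y * (mul x y).d = pd x y := by
  decide +kernel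

theorem mul_mem : ∀ x ∈ elems, ∀ y ∈ elems, mul x y ∈ elems := by decide +kernel

theorem conj_mem : ∀ x ∈ elems, conj x ∈ elems ∧ mul x (conj x) = one := by decide +kernel

theorem norm_elems : ∀ x ∈ elems,
    x.a * x.a + x.b * x.b + x.c * x.c + x.d * x.d = if x.t then 2 else 4 := by decide +kernel

theorem sq_elems : ∀ x ∈ elems, mul x x = one → x = one ∨ x = neg := by decide +kernel

theorem sep_elems : ∀ x ∈ elems, ∀ y ∈ elems, x.t = false → y.t = true →
    ¬ (x.a * x.a = 2 * (y.a * y.a) ∧ x.b * x.b = 2 * (y.b * y.b) ∧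
      x.c * x.c = 2 * (y.c * y.c) ∧ x.d * x.d = 2 * (y.d * y.d)) := by decide +kernel

theorem word_elems : ∀ x ∈ elems, ∃ p : Fin 4, ∃ q : Fin 2, ∃ r : Fin 3, ∃ s : Fin 2,
    x = mul (mul (mul (pw qi p) (pw (mul (mul qw qw) (mul qi qw)) q)) (pw qw r)) (pw qc s) := by
  decide +kernel

theorem nodup_elems : elems.toFinset.card = 48 := by decide +kernel

theorem r2 : (Real.sqrt 2 : ℂ) * (Real.sqrt 2 : ℂ) = 2 := by
  rw [← Complex.ofReal_mul, Real.mul_self_sqrt (by norm_num)]; norm_num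

theorem r2inv : ((Real.sqrt 2 : ℂ))⁻¹ * ((Real.sqrt 2 : ℂ))⁻¹ = 1 / 2 := by
  rw [← mul_inv, r2]; norm_num

theorem sc_mul (x y : QQ) : sc x.t * sc y.t * dv x y = sc (xor x.t y.t) := by
  obtain ⟨s, _, _, _, _⟩ := x
  obtain ⟨t, _, _, _, _⟩ := y
  cases s <;> cases t <;> simp only [sc, dv] <;> simp
  · ring
  · have h := r2inv
    rw [h]; norm_num

theorem toMat_mul {x y : QQ} (hx : x ∈ elems) (hy : y ∈ elems) :
    toMat (mul x y) = toMat x * toMat y := by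
  obtain ⟨h1, h2, h3, h4⟩ := dvd_elems x hx y hy
  have hs := sc_mul x y
  have ht : (mul x y).t = xor x.t y.t := rfl
  have e1 := congrArg (Int.cast : ℤ → ℂ) h1
  have e2 := congrArg (Int.cast : ℤ → ℂ) h2
  have e3 := congrArg (Int.cast : ℤ → ℂ) h3
  have e4 := congrArg (Int.cast : ℤ → ℂ) h4
  simp only [pa, pb, pc, pd] at e1 e2 e3 e4
  push_cast at e1 e2 e3 e4
  have hI : I * I = -1 := Complex.I_mul_I
  unfold toMat
  rw [ht, ← hs, Matrix.smul_mul, Matrix.mul_smul, smul_smul, mul_smul]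
  congr 1
  ext m n
  fin_cases m <;> fin_cases n <;> simp [Matrix.mul_apply, Fin.sum_univ_two]
  · linear_combination e1 + I * e4 - (x.d * y.d + x.c * y.c : ℂ) * hI
  · linear_combination e2 + I * e3 + (-x.d * y.c + x.c * y.d : ℂ) * hI
  · linear_combination -e2 + I * e3 + (-x.c * y.d + x.d * y.c : ℂ) * hI
  · linear_combination e1 - I * e4 - (x.c * y.c + x.d * y.d : ℂ) * hI

theorem toMat_one : toMat one = 1 := by
  ext m n
  fin_cases m <;> fin_cases n <;> simp [toMat, one, sc]

theorem toMat_neg : toMat neg = -1 := by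
  ext m n
  fin_cases m <;> fin_cases n <;> simp [toMat, neg, sc]

theorem toMat_qi : toMat qi = iM := by
  ext m n
  fin_cases m <;> fin_cases n <;> simp [toMat, qi, sc, iM]

theorem toMat_qw : toMat qw = wM := by
  ext m n
  fin_cases m <;> fin_cases n <;> simp [toMat, qw, sc, wM]

theorem toMat_qc : toMat qc = cM := by
  ext m n
  fin_cases m <;> fin_cases n <;> simp [toMat, qc, sc, cM]

/-- `√2`-free normalization of the scale factor, as a real number -/
def scR (t : Bool) : ℝ := if t then (Real.sqrt 2)⁻¹ else 1 / 2

theorem sc_eq (t : Bool) : sc t = ((scR t : ℝ) : ℂ) := by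
  cases t <;> simp [sc, scR]

theorem scR_ne (t : Bool) : scR t ≠ 0 := by
  cases t <;> simp [scR]

theorem coords {x y : QQ} (h : toMat x = toMat y) :
    scR x.t * x.a = scR y.t * y.a ∧ scR x.t * x.b = scR y.t * y.b ∧
    scR x.t * x.c = scR y.t * y.c ∧ scR x.t * x.d = scR y.t * y.d := by
  have h0 := congrFun (congrFun h 0) 0
  have h1 := congrFun (congrFun h 0) 1
  simp only [toMat, sc_eq] at h0 h1
  have a0 := congrArg Complex.re h0
  have a1 := congrArg Complex.im h0
  have a2 := congrArg Complex.re h1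
  have a3 := congrArg Complex.im h1
  simp at a0 a1 a2 a3
  refine ⟨?_, ?_, ?_, ?_⟩ <;> grind

theorem cross {u v : ℤ} (h : (1 / 2 : ℝ) * u = (Real.sqrt 2)⁻¹ * v) : u * u = 2 * (v * v) := by
  have hs : (Real.sqrt 2)⁻¹ * (Real.sqrt 2)⁻¹ = (1 / 2 : ℝ) := by
    rw [← mul_inv, Real.mul_self_sqrt (by norm_num)]; norm_num
  have : (u : ℝ) * u = 2 * (v * v) := by
    linear_combination (2 * u + 4 * (Real.sqrt 2)⁻¹ * v) * h + 4 * v * v * hs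
  exact_mod_cast this

theorem toMat_inj {x y : QQ} (hx : x ∈ elems) (hy : y ∈ elems) (h : toMat x = toMat y) :
    x = y := by
  obtain ⟨h1, h2, h3, h4⟩ := coords h
  by_cases ht : x.t = y.t
  · rw [ht] at h1 h2 h3 h4
    have h0 := scR_ne y.t
    ext
    · rw [ht]
    all_goals
      first
        | exact_mod_cast mul_left_cancel₀ h0 h1
        | exact_mod_cast mul_left_cancel₀ h0 h2
        | exact_mod_cast mul_left_cancel₀ h0 h3
        | exact_mod_cast mul_left_cancel₀ h0 h4
  · exfalso
    cases hxt : x.t <;> cases hyt : y.t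
    · simp_all
    · simp only [hxt, hyt, scR, if_true, Bool.false_eq_true, if_false] at h1 h2 h3 h4
      exact sep_elems x hx y hy hxt hyt ⟨cross h1, cross h2, cross h3, cross h4⟩
    · simp only [hxt, hyt, scR, if_true, Bool.false_eq_true, if_false] at h1 h2 h3 h4
      exact sep_elems y hy x hx hyt hxt
        ⟨cross h1.symm, cross h2.symm, cross h3.symm, cross h4.symm⟩
    · simp_all

theorem sc_norm {x : QQ} (hx : x ∈ elems) :
    sc x.t * sc x.t * (x.a * x.a + x.b * x.b + x.c * x.c + x.d * x.d : ℂ) = 1 := by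
  have h := norm_elems x hx
  have h' := congrArg (Int.cast : ℤ → ℂ) h
  push_cast at h'
  rw [h']
  cases x.t
  · simp [sc]; norm_num
  · simp only [sc, if_true, r2inv]; norm_num

theorem det_toMat {x : QQ} (hx : x ∈ elems) : (toMat x).det = 1 := by
  rw [← sc_norm hx]
  have hI : I * I = -1 := Complex.I_mul_I
  simp only [toMat, Matrix.det_fin_two, Matrix.smul_apply, smul_eq_mul]
  simp
  linear_combination (-(sc x.t * sc x.t) * (x.d * x.d + x.c * x.c)) * hI

theorem star_toMat (x : QQ) : star (toMat x) = toMat (conj x) := by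
  ext m n
  fin_cases m <;> fin_cases n <;>
    simp [toMat, conj, sc_eq, Matrix.star_apply, Complex.conj_ofReal]

theorem unitary_toMat {x : QQ} (hx : x ∈ elems) :
    toMat x ∈ Matrix.unitaryGroup (Fin 2) ℂ := by
  rw [Matrix.mem_unitaryGroup_iff, star_toMat, ← toMat_mul hx (conj_mem x hx).1,
    (conj_mem x hx).2, toMat_one]

theorem B_sub {g : GL (Fin 2) ℂ} (hg : g ∈ B) : ∃ x ∈ elems, (g : Matrix _ _ ℂ) = toMat x := by
  induction hg using Subgroup.closure_induction with
  | mem g h =>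
    rcases h with h | h | h
    · exact ⟨qi, by decide +kernel, by rw [h, toMat_qi]⟩
    · exact ⟨qw, by decide +kernel, by rw [h, toMat_qw]⟩
    · exact ⟨qc, by decide +kernel, by rw [h, toMat_qc]⟩
  | one => exact ⟨one, by decide +kernel, by rw [toMat_one]; rfl⟩
  | mul g h _ _ hg hh =>
    obtain ⟨x, hx, ex⟩ := hg
    obtain ⟨y, hy, ey⟩ := hh
    exact ⟨mul x y, mul_mem x hx y hy, by rw [toMat_mul hx hy, ← ex, ← ey]; rfl⟩
  | inv g _ hg =>
    obtain ⟨x, hx, ex⟩ := hg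
    refine ⟨conj x, (conj_mem x hx).1, ?_⟩
    have h1 : (g : Matrix _ _ ℂ) * toMat (conj x) = 1 := by
      rw [ex, ← toMat_mul hx (conj_mem x hx).1, (conj_mem x hx).2, toMat_one]
    exact (Units.inv_eq_of_mul_eq_one_right h1)

/-- a quaternion which is in the list and whose matrix lies in `B` -/
def InB (x : QQ) : Prop := x ∈ elems ∧ ∃ g ∈ B, (g : Matrix (Fin 2) (Fin 2) ℂ) = toMat x

theorem InB.mul {x y : QQ} (hx : InB x) (hy : InB y) : InB (mul x y) := by
  obtain ⟨mx, g, hg, eg⟩ := hx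
  obtain ⟨my, h, hh, eh⟩ := hy
  exact ⟨mul_mem x mx y my, g * h, B.mul_mem hg hh, by rw [toMat_mul mx my, ← eg, ← eh]; rfl⟩

theorem InB.one : InB one :=
  ⟨by decide +kernel, 1, B.one_mem, by rw [toMat_one]; rfl⟩

theorem InB.pw {x : QQ} (hx : InB x) (n : ℕ) : InB (pw x n) := by
  induction n with
  | zero => exact InB.one
  | succ n ih => exact ih.mul hx

theorem InB.gen {x : QQ} (hx : x ∈ elems)
    (h : toMat x = iM ∨ toMat x = wM ∨ toMat x = cM) : InB x :=
  ⟨hx, Matrix.GeneralLinearGroup.mkOfDetNeZero (toMat x) (by rw [det_toMat hx]; exact one_ne_zero),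
    Subgroup.subset_closure h, rfl⟩

theorem inB_of_mem {x : QQ} (hx : x ∈ elems) : InB x := by
  have hi : InB qi := InB.gen (by decide +kernel) (Or.inl toMat_qi)
  have hw : InB qw := InB.gen (by decide +kernel) (Or.inr (Or.inl toMat_qw))
  have hc : InB qc := InB.gen (by decide +kernel) (Or.inr (Or.inr toMat_qc))
  obtain ⟨p, q, r, s, rfl⟩ := word_elems x hx
  exact (((hi.pw _).mul (((hw.mul hw).mul (hi.mul hw)).pw _)).mul (hw.pw _)).mul (hc.pw _)

theorem card_B : Nat.card B = 48 := by
  have hinj : Function.Injective (Units.val : GL (Fin 2) ℂ → Matrix (Fin 2) (Fin 2) ℂ) :=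
    Units.val_injective
  have himg : Set.image Units.val (B : Set (GL (Fin 2) ℂ)) =
      Set.image toMat (elems.toFinset : Set QQ) := by
    ext M
    constructor
    · rintro ⟨g, hg, rfl⟩
      obtain ⟨x, hx, ex⟩ := B_sub hg
      exact ⟨x, by simpa using hx, ex.symm⟩
    · rintro ⟨x, hx, rfl⟩
      obtain ⟨_, g, hg, eg⟩ := inB_of_mem (x := x) (by simpa using hx)
      exact ⟨g, hg, eg⟩
  have h1 : Nat.card B = (B : Set (GL (Fin 2) ℂ)).ncard := rfl
  rw [h1, ← Set.ncard_image_of_injective _ hinj, himg, Set.InjOn.ncard_image,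
    Set.ncard_coe_finset, nodup_elems]
  intro x hx y hy h
  exact toMat_inj (by simpa using hx) (by simpa using hy) h

theorem neg_one_ne : (-1 : Matrix (Fin 2) (Fin 2) ℂ) ≠ 1 := by
  intro h
  have := congrFun (congrFun h 0) 0
  norm_num [Complex.ext_iff] at this

theorem orderOf_B (g : B) :
    orderOf g = 2 ↔ ((g : GL (Fin 2) ℂ) : Matrix (Fin 2) (Fin 2) ℂ) = -1 := by
  rw [orderOf_eq_prime_iff]
  constructor
  · rintro ⟨h2, h1⟩
    obtain ⟨x, hx, ex⟩ := B_sub g.2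
    have e : toMat (mul x x) = toMat one := by
      rw [toMat_mul hx hx, toMat_one, ← ex, ← Units.val_mul, ← Subgroup.coe_mul, ← sq, h2]; rfl
    rcases sq_elems x hx (toMat_inj (mul_mem x hx x hx) (by decide +kernel) e) with rfl | rfl
    · refine absurd ?_ h1
      apply Subtype.ext
      apply Units.ext
      rw [ex, toMat_one]; rfl
    · rw [ex, toMat_neg]
  · intro h
    constructor
    · apply Subtype.ext
      apply Units.ext
      rw [sq, Subgroup.coe_mul, Units.val_mul, h, neg_mul_neg, one_mul]; rfl
    · rintro rfl
      exact neg_one_ne h.symm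

theorem dM_sq : dM * dM = 1 := by
  have h := r2inv
  unfold dM
  rw [Matrix.smul_mul, Matrix.mul_smul, smul_smul, h]
  ext m n
  fin_cases m <;> fin_cases n <;> simp [Matrix.mul_apply, Fin.sum_univ_two] <;> norm_num

theorem iM_four : (iM * iM) = -1 := by
  ext m n
  fin_cases m <;> fin_cases n <;> simp [iM, Matrix.mul_apply, Fin.sum_univ_two]

theorem dM_ne (s : ℂ) : dM ≠ s • 1 := by
  intro h
  have := congrFun (congrFun h 0) 1
  simp [dM] at this

/-- the underlying matrix of an element of `G` -/
def valG (z : G) : Matrix (Fin 2) (Fin 2) ℂ := ((z : GL (Fin 2) ℂ) : Matrix (Fin 2) (Fin 2) ℂ)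

theorem not_iso : IsEmpty (B ≃* G) := by
  constructor
  intro f
  have uniq : ∀ u v : G, orderOf u = 2 → orderOf v = 2 → u = v := by
    intro u v hu hv
    have hu' := (orderOf_B (f.symm u)).1 (by rw [MulEquiv.orderOf_eq, hu])
    have hv' := (orderOf_B (f.symm v)).1 (by rw [MulEquiv.orderOf_eq, hv])
    exact f.symm.injective (Subtype.ext (Units.ext (hu'.trans hv'.symm)))
  let d0 : GL (Fin 2) ℂ := ⟨dM, dM, dM_sq, dM_sq⟩
  let i0 : GL (Fin 2) ℂ := ⟨iM, -iM, by rw [mul_neg, iM_four, neg_neg],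
    by rw [neg_mul, iM_four, neg_neg]⟩
  have hd : d0 ∈ G := Subgroup.subset_closure (Or.inr (Or.inr rfl))
  have hi : i0 ∈ G := Subgroup.subset_closure (Or.inl rfl)
  have od : orderOf (⟨d0, hd⟩ : G) = 2 := by
    rw [orderOf_eq_prime_iff]
    constructor
    · apply Subtype.ext
      apply Units.ext
      rw [sq]
      exact dM_sq
    · intro h
      have h' : dM = 1 := congrArg valG h
      exact dM_ne 1 (by rw [h', one_smul])
  have oi : orderOf (⟨i0 * i0, G.mul_mem hi hi⟩ : G) = 2 := by
    rw [orderOf_eq_prime_iff]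
    constructor
    · apply Subtype.ext
      apply Units.ext
      rw [sq]
      change (iM * iM) * (iM * iM) = 1
      rw [iM_four, neg_mul_neg, one_mul]
    · intro h
      have h' : iM * iM = 1 := congrArg valG h
      rw [iM_four] at h'
      exact neg_one_ne h'
  have h := uniq _ _ od oi
  have h' : dM = iM * iM := congrArg valG h
  exact dM_ne (-1) (by rw [h', iM_four, neg_smul, one_smul])

end QQ

theorem two_double_covers_of_octahedral_group :
    Nat.card B = 48 ∧
    (∀ g ∈ B, (g : Matrix (Fin 2) (Fin 2) ℂ) ∈ Matrix.unitaryGroup (Fin 2) ℂ ∧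
      (g : Matrix (Fin 2) (Fin 2) ℂ).det = 1) ∧
    (∃ g : B, ((g : GL (Fin 2) ℂ) : Matrix (Fin 2) (Fin 2) ℂ) = -1) ∧
    (∀ g : B, orderOf g = 2 ↔ ((g : GL (Fin 2) ℂ) : Matrix (Fin 2) (Fin 2) ℂ) = -1) ∧
    IsEmpty (B ≃* G) := by
  refine ⟨QQ.card_B, ?_, ?_, QQ.orderOf_B, QQ.not_iso⟩
  · intro g hg
    obtain ⟨x, hx, ex⟩ := QQ.B_sub hg
    rw [ex]
    exact ⟨QQ.unitary_toMat hx, QQ.det_toMat hx⟩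
  · obtain ⟨_, g, hg, eg⟩ := QQ.inB_of_mem (x := QQ.neg) (by decide +kernel)
    exact ⟨⟨g, hg⟩, by rw [← QQ.toMat_neg]; exact eg⟩
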